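/- arXiv:2310.20627 — 3 statements merged into one kernel-verified Lean document; each statement's English description precedes it below -/
import Mathlib

section
/- Let X and X' be compact subsets of ℂ and let h : ℂ → ℂ be a homeomorphism of the plane with h(X) = X' which is holomorphic on ℂ ∖ X. Suppose there exist a countable set E ⊆ X and a sequence of closed sets s₀, s₁, s₂, … ⊆ X (called shadows) such that every point of X ∖ E belongs to sᵢ for infinitely many indices i, and such that Σᵢ (diam sᵢ)² < ∞ and Σᵢ (diam h(sᵢ))² < ∞. Then h is affine: there exist a, b ∈ ℂ with a ≠ 0 such that h(z) = a·z + b for all z ∈ ℂ. -/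
/-!
The map `h` is shown to be entire by Morera's theorem, and an entire homeomorphism of the plane is
affine (`affine_of_differentiable_homeomorph`).

Since `diam s * diam h(s) ≤ (diam s)² + (diam h(s))²`, the mixed sum of the products of diameters
converges. The set of heights of horizontal lines meeting a shadow `s` has measure at most
`diam s`, so by Tonelli, on almost every horizontal line `L`, the sum of `diam h(s)` over the
shadows meeting `L` converges; as `X ∩ L` is covered infinitely often (the countable set `E` misses
almost every line), `h (X ∩ L)` has zero length (`ae_volume_image_fiber_eq_zero`). The same argument
with the identity in place of `h` shows that `X ∩ L` has zero length.

Off `X`, the integral of `|h'|²` is an area, so `h'` is locally integrable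
(`integrableOn_indicator_deriv`). Together with the previous paragraph, this makes `h` absolutely
continuous along almost every horizontal line, with derivative `h'`; likewise along almost every
vertical line, with derivative `i h'` (`ae_integral_line_eq_sub`). Fubini's theorem then gives
`∮ h dz = i ∬ h' - i ∬ h' = 0` around every rectangle (`wedgeIntegral_add_eq_zero_of_ae`).
-/

open MeasureTheory Set Filter Topology Metric

/-! ### Shadows are negligible on almost every line -/

/-- The core estimate. For a `1`-Lipschitz projection `p`, the integral over `τ` of
`∑ diam (φ (s i))`, summed over the shadows meeting the fibre `p ⁻¹' {τ}`, is at most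
`∑ diam (φ (s i)) * diam (s i)`. So for a.e. `τ` the sum over the fibre converges, and since its
tails cover, `φ (X ∩ p ⁻¹' {τ})` has zero length. This is recorded in the form that all its
`1`-Lipschitz real images are Lebesgue null, which follows from Borel–Cantelli. The
countable set `E` misses almost every fibre. -/
theorem ae_volume_image_fiber_eq_zero {X E : Set ℂ} {s : ℕ → Set ℂ} (φ : ℂ → ℂ)
    (hs : ∀ i, IsCompact (s i)) (hE : E.Countable)
    (hcover : ∀ x ∈ X \ E, {i : ℕ | x ∈ s i}.Infinite)
    (hsum : ∑' i, ediam (φ '' s i) * ediam (s i) ≠ ⊤)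
    {p : ℂ → ℝ} (hp : LipschitzWith 1 p) :
    ∀ᵐ τ : ℝ, ∀ ρ : ℂ → ℝ, LipschitzWith 1 ρ →
      volume ((fun z => ρ (φ z)) '' (X ∩ p ⁻¹' {τ})) = 0 := by
  have hpm : ∀ i, MeasurableSet (p '' s i) := fun i =>
    ((hs i).image hp.continuous).measurableSet
  have hint : ∫⁻ τ : ℝ, ∑' i, (p '' s i).indicator (fun _ => ediam (φ '' s i)) τ ≠ ⊤ := by
    rw [lintegral_tsum fun i => (measurable_const.indicator (hpm i)).aemeasurable]
    refine ne_top_of_le_ne_top hsum (ENNReal.tsum_le_tsum fun i => ?_)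
    rw [lintegral_indicator_const (hpm i)]
    gcongr
    calc volume (p '' s i) ≤ ediam (p '' s i) := Real.volume_le_diam _
      _ ≤ ediam (s i) := by simpa using hp.ediam_image_le (s i)
  have hfin := ae_lt_top
    (Measurable.tsum fun i => measurable_const.indicator (hpm i)) hint
  have hEnull : ∀ᵐ τ : ℝ, τ ∉ p '' E :=
    measure_eq_zero_iff_ae_notMem.1 ((hE.image p).measure_zero volume)
  filter_upwards [hfin, hEnull] with τ hτ hτE ρ hρ
  set A : ℕ → Set ℝ := fun i => (fun z => ρ (φ z)) '' (s i ∩ p ⁻¹' {τ})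
  have hA : ∑' i, volume (A i) ≠ ⊤ := by
    refine ne_top_of_le_ne_top hτ.ne (ENNReal.tsum_le_tsum fun i => ?_)
    by_cases hi : τ ∈ p '' s i
    · rw [indicator_of_mem hi]
      calc volume (A i) ≤ volume (ρ '' (φ '' s i)) := by
            refine measure_mono ?_
            rw [image_image]
            exact image_mono inter_subset_left
        _ ≤ ediam (ρ '' (φ '' s i)) := Real.volume_le_diam _
        _ ≤ ediam (φ '' s i) := by simpa using hρ.ediam_image_le (φ '' s i)
    · have : s i ∩ p ⁻¹' {τ} = ∅ := by
        ext z
        simp only [mem_inter_iff, mem_preimage, mem_singleton_iff, mem_empty_iff_false, iff_false]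
        exact fun hz => hi ⟨z, hz.1, hz.2⟩
      simp [A, this]
  refine measure_mono_null ?_ (measure_limsup_cofinite_eq_zero hA)
  rintro _ ⟨z, ⟨hzX, hzτ⟩, rfl⟩
  rw [mem_limsup_iff_frequently_mem, frequently_cofinite_iff_infinite]
  refine (hcover z ⟨hzX, fun hzE => hτE ⟨z, hzE, hzτ⟩⟩).mono fun i hi => ?_
  exact ⟨z, ⟨hi, hzτ⟩, rfl⟩

/-! ### The fundamental theorem of calculus on lines -/

/-- A continuous function which is differentiable off a closed null set `K`, maps `K` to a null
set and has integrable derivative satisfies the fundamental theorem of calculus. Indeed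
`|u d - u c| ≤ |u ([c, d] \ K)| + |u K| ≤ ∫_[c, d] |f|`, so `u` is absolutely continuous. -/
theorem integral_eq_sub_of_null_image {u f : ℝ → ℝ} {K : Set ℝ} {a b : ℝ}
    (hK : IsClosed K) (hK0 : volume K = 0) (huK : volume (u '' K) = 0) (hu : Continuous u)
    (hderiv : ∀ x ∉ K, HasDerivAt u (f x) x) (hf : IntervalIntegrable f volume a b) :
    ∫ x in a..b, f x = u b - u a := by
  have key : ∀ c ∈ uIcc a b, ∀ d ∈ uIcc a b, c ≤ d → dist (u c) (u d) ≤
      dist (∫ x in a..c, |f x|) (∫ x in a..d, |f x|) := by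
    intro c hc d hd hcd
    have hi : ∀ {x y}, x ∈ uIcc a b → y ∈ uIcc a b →
        IntervalIntegrable (fun x => |f x|) volume x y := fun hx hy =>
      (hf.mono_set (uIcc_subset_uIcc hx hy)).abs
    have hnn : 0 ≤ ∫ x in c..d, |f x| :=
      intervalIntegral.integral_nonneg hcd fun _ _ => abs_nonneg _
    rw [dist_comm (∫ x in a..c, |f x|), Real.dist_eq (∫ x in a..d, |f x|),
      intervalIntegral.integral_interval_sub_left (hi left_mem_uIcc hd) (hi left_mem_uIcc hc),
      abs_of_nonneg hnn]
    have h1 : ENNReal.ofReal (dist (u c) (u d)) ≤ volume (u '' Icc c d) := by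
      calc ENNReal.ofReal (dist (u c) (u d)) = volume (uIcc (u c) (u d)) := by
            rw [Real.volume_interval, Real.dist_eq, abs_sub_comm]
        _ ≤ volume (u '' Icc c d) := by
            rw [← uIcc_of_le hcd]
            exact measure_mono (intermediate_value_uIcc hu.continuousOn)
    have h2 : volume (u '' Icc c d) ≤ volume (u '' (Icc c d \ K)) := by
      calc volume (u '' Icc c d) ≤ volume (u '' (Icc c d \ K) ∪ u '' K) := by
            rw [← image_union]
            exact measure_mono (image_mono (by simp))
        _ ≤ volume (u '' (Icc c d \ K)) + volume (u '' K) := measure_union_le _ _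
        _ = _ := by rw [huK, add_zero]
    have h3 : volume (u '' (Icc c d \ K)) ≤ ∫⁻ x in Icc c d \ K, ENNReal.ofReal |f x| := by
      have := addHaar_image_le_lintegral_abs_det_fderiv volume
        (measurableSet_Icc.diff hK.measurableSet) (f := u) (s := Icc c d \ K)
        (f' := fun x => ContinuousLinearMap.toSpanSingleton ℝ (f x))
        (fun x hx => (hderiv x hx.2).hasFDerivAt.hasFDerivWithinAt)
      simpa using this
    have h4 : ∫⁻ x in Icc c d \ K, ENNReal.ofReal |f x| ≤
        ENNReal.ofReal (∫ x in c..d, |f x|) := by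
      rw [intervalIntegral.integral_of_le hcd, ← integral_Icc_eq_integral_Ioc,
        ofReal_integral_eq_lintegral_ofReal]
      · exact lintegral_mono_set sdiff_subset
      · exact (intervalIntegrable_iff_integrableOn_Icc_of_le hcd).1 (hi hc hd)
      · exact ae_of_all _ fun _ => abs_nonneg _
    exact (ENNReal.ofReal_le_ofReal_iff hnn).1 (h1.trans (h2.trans (h3.trans h4)))
  have key' : ∀ c ∈ uIcc a b, ∀ d ∈ uIcc a b, dist (u c) (u d) ≤
      dist (∫ x in a..c, |f x|) (∫ x in a..d, |f x|) := by
    intro c hc d hd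
    rcases le_total c d with hcd | hcd
    · exact key c hc d hd hcd
    · rw [dist_comm (u c), dist_comm (∫ x in a..c, |f x|)]
      exact key d hd c hc hcd
  have hG := hf.abs.absolutelyContinuousOnInterval_intervalIntegral (c := a) left_mem_uIcc
  have hac : AbsolutelyContinuousOnInterval u a b := by
    rw [absolutelyContinuousOnInterval_iff] at hG ⊢
    intro ε hε
    obtain ⟨δ, hδ, H⟩ := hG ε hε
    refine ⟨δ, hδ, fun F hF hlen => lt_of_le_of_lt ?_ (H F hF hlen)⟩
    exact Finset.sum_le_sum fun i hi => key' _ (hF.1 i hi).1 _ (hF.1 i hi).2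
  rw [← hac.integral_deriv_eq_sub]
  refine intervalIntegral.integral_congr_ae ?_
  filter_upwards [measure_eq_zero_iff_ae_notMem.1 hK0] with x hx _
  exact (hderiv x hx).deriv.symm

/-! ### Entire homeomorphisms are affine -/

/-- The zeros of the derivative are isolated, so the inverse is holomorphic off a discrete set, and
it is continuous across it. -/
theorem differentiable_symm_of_differentiable (h : ℂ ≃ₜ ℂ) (hd : Differentiable ℂ h) :
    Differentiable ℂ h.symm := by
  intro w
  obtain ⟨z, rfl⟩ := h.surjective w
  refine (Complex.analyticAt_of_differentiable_on_punctured_nhds_of_continuousAt ?_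
    h.symm.continuous.continuousAt).differentiableAt
  have hne : ∀ᶠ x in 𝓝[≠] z, deriv h x ≠ 0 := by
    refine (hd.deriv.analyticAt z).eventually_eq_zero_or_eventually_ne_zero.resolve_left ?_
    intro h0
    obtain ⟨r, hr, hball⟩ := Metric.eventually_nhds_iff_ball.1 h0
    have hsub : (ball z r).Subsingleton := fun x hx y hy => h.injective <|
      isOpen_ball.is_const_of_deriv_eq_zero (convex_ball z r).isPreconnected
        hd.differentiableOn (fun x hx => hball x hx) hx hy
    obtain ⟨y, hy, hyz⟩ := ((NormedField.nhdsNE_neBot z).nonempty_of_mem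
      (inter_mem (nhdsWithin_le_nhds (ball_mem_nhds z hr)) self_mem_nhdsWithin))
    exact hyz (hsub hy (mem_ball_self hr))
  have ht : Tendsto h.symm (𝓝[≠] (h z)) (𝓝[≠] z) := by
    refine tendsto_nhdsWithin_iff.2 ⟨?_, ?_⟩
    · have := h.symm.continuous.tendsto (h z)
      rw [h.symm_apply_apply] at this
      exact this.mono_left nhdsWithin_le_nhds
    · filter_upwards [self_mem_nhdsWithin] with w hw hw'
      exact hw (by rw [← h.apply_symm_apply w]; exact congrArg h hw')
  filter_upwards [ht.eventually hne] with w hw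
  exact (HasDerivAt.of_local_left_inverse h.symm.continuous.continuousAt
    (hd _).hasDerivAt hw (Eventually.of_forall h.apply_symm_apply)).differentiableAt

/-- Conjugation by the inversion: the Lean convention `0⁻¹ = 0` makes `w ↦ (h w⁻¹)⁻¹` take the
correct value `0` at the origin, where the singularity is removable because `h` is proper. -/
theorem differentiable_inv_comp_inv (h : ℂ ≃ₜ ℂ) (hd : Differentiable ℂ h) (h0 : h 0 = 0) :
    Differentiable ℂ fun w => (h w⁻¹)⁻¹ := by
  have hne : ∀ w : ℂ, w ≠ 0 → h w ≠ 0 := fun w hw hw' => hw (h.injective (hw'.trans h0.symm))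
  have hoff : ∀ w : ℂ, w ≠ 0 → DifferentiableAt ℂ (fun w => (h w⁻¹)⁻¹) w := fun w hw =>
    ((hd _).comp w (differentiableAt_inv hw)).inv (hne _ (inv_ne_zero hw))
  intro w
  rcases eq_or_ne w 0 with rfl | hw
  · refine (Complex.analyticAt_of_differentiable_on_punctured_nhds_of_continuousAt ?_
      ?_).differentiableAt
    · filter_upwards [self_mem_nhdsWithin] with w hw using hoff w hw
    · rw [continuousAt_iff_punctured_nhds]
      have h1 : Tendsto h (Bornology.cobounded ℂ) (Bornology.cobounded ℂ) := by
        have := h.isClosedEmbedding.tendsto_cocompact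
        rwa [← Metric.cobounded_eq_cocompact] at this
      simpa [h0, Function.comp_def] using
        tendsto_inv₀_cobounded.comp (h1.comp tendsto_inv₀_nhdsNE_zero)
  · exact hoff w hw

/-- After normalising by `g 0 = 0`, the map `k w = (g w⁻¹)⁻¹` and its inverse are both entire, so
`k' 0 ≠ 0`; hence `g z / z` is entire with a finite limit at infinity, and is constant by
Liouville's theorem. -/
theorem affine_of_differentiable_homeomorph (h : ℂ ≃ₜ ℂ) (hd : Differentiable ℂ h) :
    ∃ a b : ℂ, a ≠ 0 ∧ ∀ z : ℂ, h z = a * z + b := by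
  let g : ℂ ≃ₜ ℂ := h.trans (Homeomorph.addRight (-h 0))
  have hg : ∀ z, g z = h z - h 0 := fun z => by simp [g, sub_eq_add_neg]
  have hgd : Differentiable ℂ g := by
    rw [show (g : ℂ → ℂ) = fun z => h z - h 0 from funext hg]
    exact hd.sub_const _
  have hg0 : g 0 = 0 := by simp [hg]
  have hg0' : g.symm 0 = 0 := by rw [← hg0, g.symm_apply_apply, hg0]
  set k : ℂ → ℂ := fun w => (g w⁻¹)⁻¹
  set l : ℂ → ℂ := fun w => (g.symm w⁻¹)⁻¹
  have hk : Differentiable ℂ k := differentiable_inv_comp_inv g hgd hg0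
  have hl : Differentiable ℂ l := differentiable_inv_comp_inv g.symm
    (differentiable_symm_of_differentiable g hgd) hg0'
  have hk0 : k 0 = 0 := by simp [k, hg0]
  have hlk : ∀ w, l (k w) = w := fun w => by simp [k, l]
  -- the chain rule for `l ∘ k = id`
  have hk' : deriv k 0 ≠ 0 := by
    intro h0
    have h1 : HasDerivAt (fun w => l (k w)) (deriv l (k 0) * deriv k 0) 0 :=
      (hl _).hasDerivAt.comp (0 : ℂ) (hk 0).hasDerivAt
    have h2 := h1.unique (by simpa only [hlk] using hasDerivAt_id' (0 : ℂ))
    simp [h0] at h2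
  set q : ℂ → ℂ := dslope g 0
  have hq : Differentiable ℂ q := by
    rw [← differentiableOn_univ]
    exact (Complex.differentiableOn_dslope univ_mem).2 hgd.differentiableOn
  have hslope : Tendsto (fun w => (slope k 0 w)⁻¹) (𝓝[≠] 0) (𝓝 (deriv k 0)⁻¹) :=
    (hasDerivAt_iff_tendsto_slope.1 (hk 0).hasDerivAt).inv₀ hk'
  -- `g z / z` is the reciprocal of the slope of `k` at `z⁻¹`
  have hqlim : Tendsto q (Bornology.cobounded ℂ) (𝓝 (deriv k 0)⁻¹) := by
    refine (hslope.comp tendsto_inv₀_cobounded').congr' ?_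
    have : ∀ᶠ z : ℂ in Bornology.cobounded ℂ, z ≠ 0 := Bornology.eventually_ne_cobounded 0
    filter_upwards [this] with z hz
    simp [q, dslope_of_ne _ hz, slope_def_field, hg0, k, div_eq_mul_inv, mul_comm]
  have hconst : ∀ z w, q z = q w := fun z w => by
    rw [Metric.cobounded_eq_cocompact] at hqlim
    rw [hq.apply_eq_of_tendsto_cocompact z hqlim, hq.apply_eq_of_tendsto_cocompact w hqlim]
  have hgz : ∀ z, g z = q 0 * z := by
    intro z
    rcases eq_or_ne z 0 with rfl | hz
    · simp [hg0]
    · rw [hconst 0 z]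
      simp [q, dslope_of_ne _ hz, slope_def_field, hg0, hz]
  refine ⟨q 0, h 0, fun h0 => ?_, fun z => ?_⟩
  · have := g.injective (a₁ := 1) (a₂ := 0) (by simp [hgz, h0])
    exact one_ne_zero this
  · rw [← hgz, hg]; ring

/-! ### Absolute continuity on almost every line -/

/-- Almost every line in the direction `v` satisfies the fundamental theorem of calculus for `h`.
The lines are parametrised by `t ↦ τ * w + t * v`, with `p` recovering `τ`; only the cases
`(v, w, p) = (1, I, im)` and `(v, w, p) = (I, 1, re)` are needed. The first null hypothesis
expresses that `X` meets a.e. line in zero length, the second that the image under `h` of this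
intersection has zero length. -/
theorem ae_integral_line_eq_sub {X : Set ℂ} (hX : IsClosed X) {h f : ℂ → ℂ}
    (hc : Continuous h) (hf : ∀ z ∉ X, HasDerivAt h (f z) z) {v w : ℂ} (hv : ‖v‖ = 1)
    {p : ℂ → ℝ} (hp : ∀ τ t : ℝ, p (τ * w + t * v) = τ)
    (hnull : ∀ᵐ τ : ℝ, ∀ ρ : ℂ → ℝ, LipschitzWith 1 ρ → volume (ρ '' (X ∩ p ⁻¹' {τ})) = 0)
    (hnull' : ∀ᵐ τ : ℝ, ∀ ρ : ℂ → ℝ, LipschitzWith 1 ρ →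
      volume ((fun z => ρ (h z)) '' (X ∩ p ⁻¹' {τ})) = 0) :
    ∀ᵐ τ : ℝ, ∀ a b : ℝ,
      IntervalIntegrable (fun t : ℝ => f (τ * w + t * v)) volume a b →
      ∫ t in a..b, f (τ * w + t * v) * v = h (τ * w + b * v) - h (τ * w + a * v) := by
  filter_upwards [hnull, hnull'] with τ h1 h2 a b hi
  set γ : ℝ → ℂ := fun t => τ * w + t * v
  have hγc : Continuous γ := by fun_prop
  have hγd : ∀ t, HasDerivAt γ v t := fun t => by
    have := ((Complex.ofRealCLM.hasDerivAt (x := t)).mul_const v).const_add (τ * w)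
    simpa only [Complex.ofRealCLM_apply, Complex.ofReal_one, one_mul] using this
  have hγm : ∀ {t}, t ∈ γ ⁻¹' X → γ t ∈ X ∩ p ⁻¹' {τ} := fun {t} ht => ⟨ht, hp τ t⟩
  have hK : IsClosed (γ ⁻¹' X) := hX.preimage hγc
  have hvv : v * (starRingEnd ℂ) v = 1 := by
    rw [Complex.mul_conj, Complex.normSq_eq_norm_sq, hv]; simp
  have hK0 : volume (γ ⁻¹' X) = 0 := by
    -- the arc length parameter is a `1`-Lipschitz function of the point on the line
    let ρ : ℂ → ℝ := fun z => (z * (starRingEnd ℂ) v).re - (τ * w * (starRingEnd ℂ) v).re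
    have hρ : LipschitzWith 1 ρ := LipschitzWith.of_dist_le_mul fun x y => by
      rw [Real.dist_eq, dist_eq_norm, NNReal.coe_one, one_mul]
      calc |ρ x - ρ y| = |((x - y) * (starRingEnd ℂ) v).re| := by
            simp only [ρ, sub_mul, Complex.sub_re]; ring_nf
        _ ≤ ‖(x - y) * (starRingEnd ℂ) v‖ := Complex.abs_re_le_norm _
        _ = ‖x - y‖ := by rw [norm_mul, RCLike.norm_conj, hv, mul_one]
    refine measure_mono_null ?_ (h1 ρ hρ)
    intro t ht
    refine ⟨γ t, hγm ht, ?_⟩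
    simp only [ρ, γ]
    rw [add_mul, mul_assoc (t : ℂ), hvv]
    simp
  have hcomp : ∀ L : ℂ →L[ℝ] ℝ, LipschitzWith 1 L →
      ∫ t in a..b, L (f (γ t) * v) = L (h (γ b)) - L (h (γ a)) := by
    intro L hL
    refine integral_eq_sub_of_null_image hK hK0 (u := fun t => L (h (γ t))) ?_ ?_ ?_ ?_
    · refine measure_mono_null ?_ (h2 L hL)
      rintro _ ⟨t, ht, rfl⟩
      exact ⟨γ t, hγm ht, rfl⟩
    · exact L.continuous.comp (hc.comp hγc)
    · intro t ht
      exact L.hasFDerivAt.comp_hasDerivAt t ((hf _ ht).comp t (hγd t))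
    · have := hi.mul_const v
      exact ⟨L.integrable_comp this.1, L.integrable_comp this.2⟩
  have hreL : LipschitzWith 1 Complex.reCLM := LipschitzWith.of_dist_le_mul fun x y => by
    simpa [Real.dist_eq, dist_eq_norm] using Complex.abs_re_le_norm (x - y)
  have himL : LipschitzWith 1 Complex.imCLM := LipschitzWith.of_dist_le_mul fun x y => by
    simpa [Real.dist_eq, dist_eq_norm] using Complex.abs_im_le_norm (x - y)
  have hre := hcomp Complex.reCLM hreL
  have him := hcomp Complex.imCLM himL
  rw [ContinuousLinearMap.intervalIntegral_comp_comm _ (hi.mul_const v)] at hre him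
  exact Complex.ext (by simpa using hre) (by simpa using him)

/-! ### Integrability of the derivative -/

/-- The derivative off `X` is locally square integrable, as `∫ |h'|²` over `R \ X` is the area of
`h (R \ X)`. -/
theorem integrableOn_indicator_deriv {X : Set ℂ} (hX : IsClosed X) (h : ℂ ≃ₜ ℂ)
    (hhol : ∀ z ∉ X, DifferentiableAt ℂ h z) {R : Set ℂ} (hR : IsCompact R) :
    IntegrableOn (Xᶜ.indicator (deriv h)) R := by
  have hm : Measurable (Xᶜ.indicator (deriv h)) :=
    (measurable_deriv _).indicator hX.measurableSet.compl
  -- the Jacobian determinant of a holomorphic map is `|h'|²`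
  have hdet : ∀ z, ENNReal.ofReal |((ContinuousLinearMap.toSpanSingleton ℂ
      (deriv h z)).restrictScalars ℝ).det| = ‖deriv h z‖ₑ ^ 2 := by
    intro z
    have : ((ContinuousLinearMap.toSpanSingleton ℂ (deriv h z)).restrictScalars ℝ).det
        = ‖deriv h z‖ ^ 2 := by
      simp [ContinuousLinearMap.det, LinearMap.det_restrictScalars, Algebra.norm_complex_eq,
        Complex.normSq_eq_norm_sq]
    rw [this, abs_of_nonneg (by positivity), ENNReal.ofReal_pow (norm_nonneg _),
      ofReal_norm]
  have harea : ∫⁻ z in R \ X, ‖deriv h z‖ₑ ^ 2 = volume (h '' (R \ X)) := by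
    rw [← lintegral_abs_det_fderiv_eq_addHaar_image volume
      (hR.measurableSet.diff hX.measurableSet)
      (fun z hz => ((hhol z hz.2).hasDerivAt.hasFDerivAt.restrictScalars ℝ).hasFDerivWithinAt)
      h.injective.injOn]
    simp_rw [hdet]
  have hfin : ∫⁻ z in R, ‖Xᶜ.indicator (deriv h) z‖ₑ ^ 2 < ⊤ := by
    have : ∀ z, ‖Xᶜ.indicator (deriv h) z‖ₑ ^ 2 = Xᶜ.indicator (fun z => ‖deriv h z‖ₑ ^ 2) z := by
      intro z
      by_cases hz : z ∈ X <;> simp [hz]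
    simp_rw [this]
    rw [setLIntegral_indicator hX.measurableSet.compl, inter_comm, ← sdiff_eq, harea]
    exact (measure_mono (image_mono sdiff_subset)).trans_lt
      (hR.image h.continuous).measure_lt_top
  have : IsFiniteMeasure (volume.restrict R) := ⟨by simpa using hR.measure_lt_top⟩
  have hL2 : MemLp (Xᶜ.indicator (deriv h)) 2 (volume.restrict R) := by
    refine ⟨hm.aestronglyMeasurable, ?_⟩
    rw [eLpNorm_lt_top_iff_lintegral_rpow_enorm_lt_top (by simp) (by simp)]
    simpa using hfin
  exact hL2.integrable (by norm_num)

/-! ### Summability of the mixed products of diameters -/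

theorem tsum_ediam_mul_ediam_ne_top {A B : ℕ → Set ℂ}
    (hA : ∀ i, Bornology.IsBounded (A i)) (hB : ∀ i, Bornology.IsBounded (B i))
    (hsA : Summable fun i => diam (A i) ^ 2) (hsB : Summable fun i => diam (B i) ^ 2) :
    ∑' i, ediam (A i) * ediam (B i) ≠ ⊤ := by
  refine ne_top_of_le_ne_top (hsA.add hsB).tsum_ofReal_ne_top (ENNReal.tsum_le_tsum fun i => ?_)
  rw [← ENNReal.ofReal_toReal (hA i).ediam_ne_top, ← ENNReal.ofReal_toReal (hB i).ediam_ne_top,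
    ← ENNReal.ofReal_mul ENNReal.toReal_nonneg]
  refine ENNReal.ofReal_le_ofReal ?_
  change diam (A i) * diam (B i) ≤ _
  nlinarith [sq_nonneg (diam (A i) - diam (B i)), sq_nonneg (diam (A i)), sq_nonneg (diam (B i))]

/-! ### Vanishing of the rectangle integrals -/

/-- If `f` is a locally integrable derivative of `h` along a.e. horizontal and a.e. vertical line,
then the boundary integral of `h` over a rectangle is the difference of the two iterated integrals
of `f * I`, which agree by Fubini's theorem. -/
theorem wedgeIntegral_add_eq_zero_of_ae {h f : ℂ → ℂ} (hc : Continuous h)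
    (hfi : ∀ R : Set ℂ, IsCompact R → IntegrableOn f R)
    (hhor : ∀ᵐ y : ℝ, ∀ a b : ℝ,
      IntervalIntegrable (fun x : ℝ => f (x + y * Complex.I)) volume a b →
      ∫ x in a..b, f (x + y * Complex.I) = h (b + y * Complex.I) - h (a + y * Complex.I))
    (hver : ∀ᵐ x : ℝ, ∀ a b : ℝ,
      IntervalIntegrable (fun y : ℝ => f (x + y * Complex.I)) volume a b →
      ∫ y in a..b, f (x + y * Complex.I) * Complex.I =
        h (x + b * Complex.I) - h (x + a * Complex.I)) (z w : ℂ) :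
    Complex.wedgeIntegral z w h + Complex.wedgeIntegral w z h = 0 := by
  rw [Complex.wedgeIntegral_add_wedgeIntegral_eq]
  set μ := volume.restrict (uIoc z.re w.re)
  set ν := volume.restrict (uIoc z.im w.im)
  set F : ℝ → ℝ → ℂ := fun x y => f (x + y * Complex.I)
  have hF : Integrable (Function.uncurry F) (μ.prod ν) := by
    have h1 := hfi (uIcc z.re w.re ×ℂ uIcc z.im w.im) (isCompact_uIcc.reProdIm isCompact_uIcc)
    have h2 := Complex.volume_preserving_equiv_real_prod.symm.integrableOn_comp_preimage
      (Complex.measurableEquivRealProd.symm.measurableEmbedding) |>.2 h1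
    rw [Measure.prod_restrict, ← Measure.volume_eq_prod]
    refine (h2.mono_set ?_).congr ?_
    · rintro ⟨x, y⟩ ⟨hx, hy⟩
      exact ⟨uIoc_subset_uIcc hx, uIoc_subset_uIcc hy⟩
    · refine ae_of_all _ fun q => ?_
      simp [F, Function.uncurry, Complex.mk_eq_add_mul_I]
  have hH : ∫ y in z.im..w.im, ∫ x in z.re..w.re, F x y =
      ∫ y in z.im..w.im, (h (w.re + y * Complex.I) - h (z.re + y * Complex.I)) := by
    rw [intervalIntegral.intervalIntegral_eq_integral_uIoc,
      intervalIntegral.intervalIntegral_eq_integral_uIoc]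
    congr 1
    refine integral_congr_ae ?_
    filter_upwards [hF.prod_left_ae, ae_restrict_of_ae hhor] with y hy hy'
    exact hy' _ _ (intervalIntegrable_iff.2 hy)
  have hV : ∫ x in z.re..w.re, ∫ y in z.im..w.im, F x y * Complex.I =
      ∫ x in z.re..w.re, (h (x + w.im * Complex.I) - h (x + z.im * Complex.I)) := by
    rw [intervalIntegral.intervalIntegral_eq_integral_uIoc,
      intervalIntegral.intervalIntegral_eq_integral_uIoc]
    congr 1
    refine integral_congr_ae ?_
    filter_upwards [hF.prod_right_ae, ae_restrict_of_ae hver] with x hx hx'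
    exact hx' _ _ (intervalIntegrable_iff.2 hx)
  have hswap : ∫ y in z.im..w.im, ∫ x in z.re..w.re, F x y =
      ∫ x in z.re..w.re, ∫ y in z.im..w.im, F x y := by
    simp only [intervalIntegral.intervalIntegral_eq_integral_uIoc, integral_smul]
    rw [integral_integral_swap hF, smul_comm]
  simp only [intervalIntegral.integral_mul_const] at hV
  rw [intervalIntegral.integral_sub] at hH hV
  · rw [← hswap, hH] at hV
    simp only [smul_eq_mul]
    linear_combination hV
  all_goals exact Continuous.intervalIntegrable (by fun_prop) _ _

/-! ### Conclusion -/

/-- **Weak conformal removability** (planar form).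
If `h : ℂ → ℂ` is a homeomorphism of the plane taking the compact set `X` onto `X'`,
holomorphic off `X`, and there are a countable exceptional set `E ⊆ X` and closed
"shadows" `s i ⊆ X` such that every point of `X \ E` lies in infinitely many shadows,
with `∑ (diam sᵢ)² < ∞` and `∑ (diam h(sᵢ))² < ∞`, then `h` is affine. -/
theorem weak_conformal_removability
    (X X' : Set ℂ) (hX : IsCompact X) (hX' : IsCompact X')
    (h : ℂ ≃ₜ ℂ) (himg : h '' X = X')
    (hhol : ∀ z ∉ X, DifferentiableAt ℂ h z)
    (E : Set ℂ) (hEX : E ⊆ X) (hEcount : E.Countable)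
    (s : ℕ → Set ℂ) (hsclosed : ∀ i, IsClosed (s i)) (hsX : ∀ i, s i ⊆ X)
    (hcover : ∀ x ∈ X \ E, {i : ℕ | x ∈ s i}.Infinite)
    (hsum : Summable (fun i => (Metric.diam (s i)) ^ 2))
    (hsum' : Summable (fun i => (Metric.diam (h '' s i)) ^ 2)) :
    ∃ a b : ℂ, a ≠ 0 ∧ ∀ z : ℂ, h z = a * z + b := by
  refine affine_of_differentiable_homeomorph h ?_
  have hsc : ∀ i, IsCompact (s i) := fun i => hX.of_isClosed_subset (hsclosed i) (hsX i)
  have hsb : ∀ i, Bornology.IsBounded (s i) := fun i => (hsc i).isBounded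
  have hsb' : ∀ i, Bornology.IsBounded (h '' s i) := fun i =>
    ((hsc i).image h.continuous).isBounded
  have hre : LipschitzWith 1 Complex.re := LipschitzWith.of_dist_le_mul fun x y => by
    simpa [Real.dist_eq, dist_eq_norm] using Complex.abs_re_le_norm (x - y)
  have him : LipschitzWith 1 Complex.im := LipschitzWith.of_dist_le_mul fun x y => by
    simpa [Real.dist_eq, dist_eq_norm] using Complex.abs_im_le_norm (x - y)
  have hT : ∑' i, ediam ((fun z : ℂ => z) '' s i) * ediam (s i) ≠ ⊤ := by
    simpa using tsum_ediam_mul_ediam_ne_top hsb hsb hsum hsum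
  have hT' := tsum_ediam_mul_ediam_ne_top hsb' hsb hsum' hsum
  have hline : ∀ (v w : ℂ) (p : ℂ → ℝ), ‖v‖ = 1 → LipschitzWith 1 p →
      (∀ τ t : ℝ, p (τ * w + t * v) = τ) → _ := fun v w p hv hpl hp =>
    ae_integral_line_eq_sub hX.isClosed h.continuous (f := Xᶜ.indicator (deriv h))
      (fun z hz => by
        rw [indicator_of_mem (show z ∈ Xᶜ from hz)]
        exact (hhol z hz).hasDerivAt) hv hp
      (ae_volume_image_fiber_eq_zero _ hsc hEcount hcover hT hpl)
      (ae_volume_image_fiber_eq_zero h hsc hEcount hcover hT' hpl)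
  have hhor := hline 1 Complex.I Complex.im (by simp) him (by simp)
  have hver := hline Complex.I 1 Complex.re (by simp) hre (by simp)
  have hcons : Complex.IsConservativeOn h univ := fun z w _ => by
    refine eq_neg_of_add_eq_zero_left (wedgeIntegral_add_eq_zero_of_ae h.continuous
      (fun R hR => integrableOn_indicator_deriv hX.isClosed h hhol hR) ?_ ?_ z w)
    · simpa [add_comm] using hhor
    · simpa using hver
  rw [← differentiableOn_univ]
  exact (Complex.isConservativeOn_and_continuousOn_iff_isDifferentiableOn isOpen_univ).1
    ⟨hcons, h.continuous.continuousOn⟩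
end

section
/- Define the mediant of two rationals a and b (in lowest terms) as the rational (a.num + b.num)/(a.den + b.den). On ordered triples of rationals define two moves: L(a,b,c) = (a, mediant(a,b), b) and R(a,b,c) = (b, mediant(b,c), c). Start from the triple t₀ = (0, 1/2, 1) and apply a finite word w in the letters {L, R}; let (a_w, b_w, c_w) denote the resulting triple, and let k₁, k₂, …, k_m be the lengths of the maximal blocks of consecutive equal letters of w (its run-length decomposition). Then there exist absolute constants C₁, C₂ > 0, independent of the word w, such that for every nonempty word w: C₁ · Σ_{i=1}^m log(1 + kᵢ) ≤ log(1/(c_w − a_w)) ≤ C₂ · Σ_{i=1}^m log(1 + kᵢ). -/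
/-!
Call rationals `a`, `c` *Farey neighbours* when `c.num * a.den - a.num * c.den = 1`. The mediant of
two neighbours is already in lowest terms and is a neighbour of both, so along the walk the outer
vertices stay neighbours, `c_w - a_w = 1 / (q * s)` for their denominators `q`, `s`, and the moves
act on `(q, s)` by `L : (q, s) ↦ (q, q + s)` and `R : (q, s) ↦ (q + s, s)`, starting at `(1, 1)`.

Let `Π = ∏ (1 + kᵢ)`. A block `L ^ k` sends `(q, s)` to `(q, s + k * q)`, which multiplies
`q + s` by at most `1 + k`; hence `q + s ≤ 2 * Π` and `q * s ≤ Π ^ 2`. Conversely such a block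
follows an `R`-block, so `s ≤ q` when it starts and `q * s` gets multiplied by at least `1 + k`;
the first block starts at `q = s = 1`. Hence `Π ≤ q * s`, and the constants `1` and `2` work.
The two inequalities are `dens_prod_lower` and `dens_sum_upper`.
-/

/-- The mediant of two rationals `a` and `b` (in lowest terms):
`(a.num + b.num) / (a.den + b.den)`. -/
def mediant (a b : ℚ) : ℚ :=
  ((a.num + b.num : ℤ) : ℚ) / ((a.den + b.den : ℕ) : ℚ)

/-- One step in the Farey tessellation walk: `false` is the move
`L(a,b,c) = (a, mediant a b, b)` and `true` is the move `R(a,b,c) = (b, mediant b c, c)`. -/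
def fareyStep (move : Bool) : ℚ × ℚ × ℚ → ℚ × ℚ × ℚ
  | (a, b, c) => if move then (b, mediant b c, c) else (a, mediant a b, b)

/-- The triple obtained from `(0, 1/2, 1)` by applying the finite word `w` in `{L, R}`. -/
def fareyTriple (w : List Bool) : ℚ × ℚ × ℚ :=
  w.foldl (fun t m => fareyStep m t) (0, 1/2, 1)

/-- The run-length decomposition of a word: the lengths of the maximal blocks of
consecutive equal letters. -/
def runLengths : List Bool → List ℕ
  | [] => []
  | [_] => [1]
  | a :: b :: l =>
    match runLengths (b :: l) with
    | [] => [1]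
    | k :: ks => if a = b then (k + 1) :: ks else 1 :: k :: ks

/-- The action of a move on the denominators `(q, s)` of the outer vertices of a triangle. -/
def denStep (p : ℕ × ℕ) (m : Bool) : ℕ × ℕ :=
  if m then (p.1 + p.2, p.2) else (p.1, p.1 + p.2)

/-- The endpoints of an edge of the Farey tessellation, in increasing order. -/
def FareyNeighbors (a c : ℚ) : Prop := c.num * a.den - a.num * c.den = 1

lemma FareyNeighbors.sub_eq {a c : ℚ} (h : FareyNeighbors a c) :
    c - a = 1 / ((a.den * c.den : ℕ) : ℚ) := by
  have ha : (a.den : ℚ) ≠ 0 := by exact_mod_cast a.den_nz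
  have hc : (c.den : ℚ) ≠ 0 := by exact_mod_cast c.den_nz
  have h' : (c.num : ℚ) * a.den - a.num * c.den = 1 := by exact_mod_cast h
  conv_lhs => rw [← Rat.num_div_den a, ← Rat.num_div_den c]
  push_cast
  field_simp
  linarith

lemma FareyNeighbors.mediant_num_den {a c : ℚ} (h : FareyNeighbors a c) :
    (mediant a c).num = a.num + c.num ∧ (mediant a c).den = a.den + c.den := by
  have hpos : (0 : ℤ) < ((a.den + c.den : ℕ) : ℤ) := by
    have := a.den_pos
    omega
  -- The Bézout relation certifying that the mediant fraction is in lowest terms.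
  have hco : IsCoprime (a.num + c.num) ((a.den + c.den : ℕ) : ℤ) := by
    refine ⟨a.den, -a.num, ?_⟩
    unfold FareyNeighbors at h
    push_cast
    linarith
  have hn : Nat.Coprime (a.num + c.num).natAbs ((a.den + c.den : ℕ) : ℤ).natAbs :=
    Int.isCoprime_iff_gcd_eq_one.mp hco
  have e : mediant a c
      = ((a.num + c.num : ℤ) : ℚ) / (((a.den + c.den : ℕ) : ℤ) : ℚ) := by
    simp [mediant]
  rw [e]
  refine ⟨Rat.num_div_eq_of_coprime hpos hn, ?_⟩
  exact_mod_cast Rat.den_div_eq_of_coprime hpos hn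

lemma FareyNeighbors.left_mediant {a c : ℚ} (h : FareyNeighbors a c) :
    FareyNeighbors a (mediant a c) := by
  obtain ⟨h1, h2⟩ := h.mediant_num_den
  unfold FareyNeighbors at *
  rw [h1, h2]
  push_cast
  linarith

lemma FareyNeighbors.mediant_right {a c : ℚ} (h : FareyNeighbors a c) :
    FareyNeighbors (mediant a c) c := by
  obtain ⟨h1, h2⟩ := h.mediant_num_den
  unfold FareyNeighbors at *
  rw [h1, h2]
  push_cast
  linarith

/-- Walking from the triangle `(a, mediant a c, c)` moves the outer denominators by `denStep`. -/
lemma walk_sub_eq (w : List Bool) : ∀ a c : ℚ, FareyNeighbors a c →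
    (w.foldl (fun t m => fareyStep m t) (a, mediant a c, c)).2.2
      - (w.foldl (fun t m => fareyStep m t) (a, mediant a c, c)).1
      = 1 / (((w.foldl denStep (a.den, c.den)).1 * (w.foldl denStep (a.den, c.den)).2 : ℕ) : ℚ) := by
  induction w with
  | nil => intro a c h; simpa using h.sub_eq
  | cons m l ih =>
    intro a c h
    have hd := h.mediant_num_den.2
    cases m
    · have := ih _ _ h.left_mediant
      rw [hd] at this
      simpa [fareyStep, denStep] using this
    · have := ih _ _ h.mediant_right
      rw [hd] at this
      simpa [fareyStep, denStep] using this

lemma fareyTriple_sub_eq (w : List Bool) :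
    (fareyTriple w).2.2 - (fareyTriple w).1
      = 1 / (((w.foldl denStep (1, 1)).1 * (w.foldl denStep (1, 1)).2 : ℕ) : ℚ) := by
  have h : FareyNeighbors 0 1 := by simp [FareyNeighbors]
  have hm : mediant 0 1 = 1 / 2 := by norm_num [mediant]
  have := walk_sub_eq w 0 1 h
  rw [hm] at this
  simpa [fareyTriple] using this

lemma runLengths_cons (a : Bool) (l : List Bool) : ∃ k ks, runLengths (a :: l) = k :: ks := by
  cases l with
  | nil => exact ⟨1, [], rfl⟩
  | cons b l =>
    simp only [runLengths]
    split
    · exact ⟨_, _, rfl⟩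
    · split_ifs
      · exact ⟨_, _, rfl⟩
      · exact ⟨_, _, rfl⟩

/-- The lower bound is the product of the denominators after the first block, of length `k`,
times the factors `1 + kᵢ` of the later blocks. Keeping the first block exact is what lets the
induction run letter by letter. -/
lemma dens_prod_lower (l : List Bool) : ∀ (a : Bool) (q s k : ℕ) (ks : List ℕ),
    runLengths (a :: l) = k :: ks →
    (if a then (q + k * s) * s else q * (s + k * q)) * (ks.map (1 + ·)).prod
      ≤ ((a :: l).foldl denStep (q, s)).1 * ((a :: l).foldl denStep (q, s)).2 := by
  induction l with
  | nil =>
    intro a q s k ks h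
    obtain ⟨rfl, rfl⟩ : 1 = k ∧ [] = ks := by simpa [runLengths] using h
    cases a <;> simp [denStep, add_comm]
  | cons b l ih =>
    intro a q s k ks h
    obtain ⟨j, js, hj⟩ := runLengths_cons b l
    have key := fun q s => ih b q s j js hj
    simp only [runLengths, hj] at h
    rw [List.foldl_cons]
    cases a <;> cases b <;> simp at h <;> obtain ⟨rfl, rfl⟩ := h
    · refine le_trans (le_of_eq ?_) (key q (q + s))
      simp; ring_nf; simp
    · refine le_trans ?_ (key q (q + s))
      simp only [Bool.false_eq_true, if_true, if_false, List.map_cons, List.prod_cons,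
        ← mul_assoc]
      gcongr ?_ * _
      nlinarith [Nat.zero_le (j * s * (q + s))]
    · refine le_trans ?_ (key (q + s) s)
      simp only [Bool.false_eq_true, if_true, if_false, List.map_cons, List.prod_cons,
        ← mul_assoc]
      gcongr ?_ * _
      nlinarith [Nat.zero_le (j * q * (q + s))]
    · refine le_trans (le_of_eq ?_) (key (q + s) s)
      simp; ring_nf; simp

/-- The upper bound is the sum of the denominators after the first block, of length `k`,
times the factors `1 + kᵢ` of the later blocks. -/
lemma dens_sum_upper (l : List Bool) : ∀ (a : Bool) (q s k : ℕ) (ks : List ℕ),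
    runLengths (a :: l) = k :: ks →
    ((a :: l).foldl denStep (q, s)).1 + ((a :: l).foldl denStep (q, s)).2
      ≤ (q + s + k * (if a then s else q)) * (ks.map (1 + ·)).prod := by
  induction l with
  | nil =>
    intro a q s k ks h
    obtain ⟨rfl, rfl⟩ : 1 = k ∧ [] = ks := by simpa [runLengths] using h
    cases a <;> simp [denStep] <;> omega
  | cons b l ih =>
    intro a q s k ks h
    obtain ⟨j, js, hj⟩ := runLengths_cons b l
    have key := fun q s => ih b q s j js hj
    simp only [runLengths, hj] at h
    rw [List.foldl_cons]
    cases a <;> cases b <;> simp at h <;> obtain ⟨rfl, rfl⟩ := h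
    · refine (key q (q + s)).trans (le_of_eq ?_)
      simp only [Bool.false_eq_true, if_false]; ring
    · refine (key q (q + s)).trans ?_
      simp only [Bool.false_eq_true, if_true, if_false, List.map_cons, List.prod_cons,
        ← mul_assoc]
      gcongr ?_ * _
      nlinarith [Nat.zero_le (j * q)]
    · refine (key (q + s) s).trans ?_
      simp only [Bool.false_eq_true, if_true, if_false, List.map_cons, List.prod_cons,
        ← mul_assoc]
      gcongr ?_ * _
      nlinarith [Nat.zero_le (j * s)]
    · refine (key (q + s) s).trans (le_of_eq ?_)
      simp only [if_true]; ring

lemma dens_bounds (w : List Bool) (hw : w ≠ []) :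
    ((runLengths w).map (1 + ·)).prod
        ≤ (w.foldl denStep (1, 1)).1 * (w.foldl denStep (1, 1)).2 ∧
      (w.foldl denStep (1, 1)).1 * (w.foldl denStep (1, 1)).2
        ≤ ((runLengths w).map (1 + ·)).prod ^ 2 := by
  obtain ⟨a, l, rfl⟩ := List.exists_cons_of_ne_nil hw
  obtain ⟨k, ks, h⟩ := runLengths_cons a l
  have h1 := dens_prod_lower l a 1 1 k ks h
  have h2 := dens_sum_upper l a 1 1 k ks h
  rw [h, List.map_cons, List.prod_cons]
  generalize (ks.map (1 + ·)).prod = P at *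
  generalize (a :: l).foldl denStep (1, 1) = p at *
  simp only [ite_self, mul_one, one_mul] at h1 h2
  refine ⟨h1, ?_⟩
  have h3 : p.1 + p.2 ≤ 2 * ((1 + k) * P) := h2.trans (by nlinarith [Nat.zero_le (k * P)])
  -- The inequality of arithmetic and geometric means for `p.1`, `p.2`.
  have h4 : 4 * (p.1 * p.2) ≤ (p.1 + p.2) ^ 2 := by
    simpa [mul_assoc] using four_mul_le_sq_add p.1 p.2
  have h5 := Nat.pow_le_pow_left h3 2
  nlinarith

lemma log_prod_one_add (ks : List ℕ) :
    (ks.map (fun k : ℕ => Real.log (1 + (k : ℝ)))).sum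
      = Real.log (((ks.map (1 + ·)).prod : ℕ) : ℝ) ∧ 0 < (ks.map (1 + ·)).prod := by
  induction ks with
  | nil => simp
  | cons k ks ih =>
    obtain ⟨h1, h2⟩ := ih
    refine ⟨?_, by simp only [List.map_cons, List.prod_cons]; positivity⟩
    rw [List.map_cons, List.sum_cons, h1, List.map_cons, List.prod_cons, Nat.cast_mul,
      Real.log_mul (by positivity) (by positivity)]
    push_cast
    rfl

/-- For the triangle `(a_w, b_w, c_w)` of the Farey tessellation reached from `(0, 1/2, 1)`
by a nonempty word `w` with run-length decomposition `k₁, …, k_m`, one has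
`log(1/(c_w − a_w)) ≍ ∑ᵢ log(1 + kᵢ)`, with absolute implied constants. -/
theorem log_inv_diam_farey_triangle_comparable :
    ∃ C₁ C₂ : ℝ, 0 < C₁ ∧ 0 < C₂ ∧
      ∀ w : List Bool, w ≠ [] →
        C₁ * (((runLengths w).map (fun k => Real.log (1 + (k : ℝ)))).sum)
            ≤ Real.log (1 / (((fareyTriple w).2.2 - (fareyTriple w).1 : ℚ) : ℝ)) ∧
        Real.log (1 / (((fareyTriple w).2.2 - (fareyTriple w).1 : ℚ) : ℝ))
            ≤ C₂ * (((runLengths w).map (fun k => Real.log (1 + (k : ℝ)))).sum) := by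
  refine ⟨1, 2, one_pos, two_pos, fun w hw => ?_⟩
  obtain ⟨h1, h2⟩ := dens_bounds w hw
  obtain ⟨h3, h4⟩ := log_prod_one_add (runLengths w)
  -- The real-valued `k` in the statement makes `runLengths w` coerce to a list of reals.
  have hc : (runLengths w : List ℝ) = (runLengths w).map (fun k : ℕ => (k : ℝ)) := by
    simp [List.map_eq_flatMap]
  rw [hc, List.map_map, Function.comp_def, h3, fareyTriple_sub_eq]
  generalize ((runLengths w).map (1 + ·)).prod = P at *
  generalize (w.foldl denStep (1, 1)).1 * (w.foldl denStep (1, 1)).2 = N at *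
  have e : (1 : ℝ) / ((1 / (N : ℚ) : ℚ) : ℝ) = N := by push_cast; simp
  rw [e]
  have hN : 0 < N := h4.trans_le h1
  refine ⟨?_, ?_⟩
  · rw [one_mul]
    exact Real.log_le_log (by exact_mod_cast h4) (by exact_mod_cast h1)
  · have h := Real.log_le_log (x := (N : ℝ)) (y := (P : ℝ) ^ 2) (by exact_mod_cast hN)
      (by exact_mod_cast h2)
    simpa [Real.log_pow] using h
end

section
/- Let K ⊆ ℂ be a nonempty compact connected set and ε > 0. Then there exists a Jordan curve Γ ⊆ ℂ (the image of a continuous injective map from the unit circle into ℂ) such that the Hausdorff distance between Γ and K is less than ε, and moreover Γ is ε-thin in the sense that every point of every bounded connected component of ℂ ∖ Γ lies within distance ε of Γ. -/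
/-!
The curve is the image of a small round circle under a homeomorphism of the plane.

Let `U` be the open `ε / 3`-neighbourhood of `K`; it is open and connected. Let `F` be a finite
`ε / 3`-net of `K`, and let `C` be a round circle whose closed disc `D` lies in `U`. Homeomorphisms
of the plane that are the identity off `U` can move finitely many points of `U` freely
(`exists_homeomorph_subset_image`), so some such `φ` satisfies `F ⊆ φ(C)`. Put `Γ = φ(C)`. Then
`F ⊆ Γ ⊆ U`, which bounds the Hausdorff distance. Moreover a point off `φ(D)` can be joined to
infinity in the complement of `Γ` (`not_isBounded_connectedComponentIn`: take the image of a ray),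
so every bounded complementary component lies in `φ(D) ⊆ U`, and is therefore within `2ε / 3` of
`F ⊆ Γ`. The Jordan curve theorem is not needed.

The transitivity statement is proved by moving one point at a time while fixing those already in
place. This needs that a connected open set stays connected when finitely many points are removed
(`isPreconnected_diff_finite`) and that a point can be moved to any other point of a connected open
set (`exists_homeomorph_of_isPreconnected`); the latter reduces to pushing a point inside a ball
(`exists_homeomorph_ball`).
-/

open Metric Set Filter Topology

/-- The centre of a ball can be pushed to any point `y` of the ball by a homeomorphism which is the
identity off the ball: add to `z` the multiple `max 0 (1 - ‖z - x‖ / r)` of `y - x`. This is a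
perturbation of the identity with Lipschitz constant `‖y - x‖ / r < 1`. -/
lemma exists_homeomorph_ball {x y : ℂ} {r : ℝ} (hr : 0 < r) (hy : y ∈ ball x r) :
    ∃ φ : ℂ ≃ₜ ℂ, (∀ z ∉ ball x r, φ z = z) ∧ φ x = y := by
  set f : ℂ → ℂ := fun z => z + (max 0 (1 - ‖z - x‖ / r)) • (y - x) with hf
  have hyx : ‖y - x‖ < r := by simpa [dist_eq_norm] using hy
  let c : NNReal := ⟨‖y - x‖ / r, by positivity⟩
  have hc1 : c < 1 := by
    rw [← NNReal.coe_lt_coe]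
    exact (div_lt_one hr).2 hyx
  have key : ApproximatesLinearOn f
      ((ContinuousLinearEquiv.refl ℝ ℂ : ℂ ≃L[ℝ] ℂ) : ℂ →L[ℝ] ℂ) univ c := by
    intro a _ b _
    have h1 : f a - f b - (ContinuousLinearEquiv.refl ℝ ℂ : ℂ →L[ℝ] ℂ) (a - b)
        = (max 0 (1 - ‖a - x‖ / r) - max 0 (1 - ‖b - x‖ / r)) • (y - x) := by
      simp only [hf, ContinuousLinearEquiv.coe_refl, ContinuousLinearMap.id_apply, sub_smul]
      ring
    rw [h1, norm_smul, Real.norm_eq_abs]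
    have h2 : |max 0 (1 - ‖a - x‖ / r) - max 0 (1 - ‖b - x‖ / r)| ≤ ‖a - b‖ / r := by
      calc _ ≤ |(1 - ‖a - x‖ / r) - (1 - ‖b - x‖ / r)| := by
            simpa using abs_max_sub_max_le_max 0 (1 - ‖a - x‖ / r) 0 (1 - ‖b - x‖ / r)
        _ = |‖b - x‖ - ‖a - x‖| / r := by
            rw [← abs_of_pos hr, ← abs_div, abs_of_pos hr]
            congr 1
            ring
        _ ≤ ‖a - b‖ / r := by
            gcongr
            have := abs_norm_sub_norm_le (b - x) (a - x)
            rwa [sub_sub_sub_cancel_right, norm_sub_rev b a] at this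
    calc _ ≤ ‖a - b‖ / r * ‖y - x‖ := by gcongr
      _ = (‖y - x‖ / r) * ‖a - b‖ := by ring
  refine ⟨key.toHomeomorph f (Or.inr ?_), fun z hz => ?_, ?_⟩
  · have : ‖((ContinuousLinearEquiv.refl ℝ ℂ).symm : ℂ →L[ℝ] ℂ)‖₊ = 1 := by
      ext
      simp
    rw [this]
    simpa using hc1
  · change f z = z
    have hz' : r ≤ ‖z - x‖ := by simpa [dist_eq_norm] using hz
    have : 1 - ‖z - x‖ / r ≤ 0 := by
      rw [sub_nonpos]
      exact (one_le_div hr).2 hz'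
    simp [hf, max_eq_left this]
  · change f x = y
    simp [hf]

/-- "Some homeomorphism supported in `V` moves `a` to `b`" is an equivalence relation on `V` with
open classes. -/
lemma exists_homeomorph_of_isPreconnected {V : Set ℂ} (hV : IsOpen V) (hc : IsPreconnected V)
    {a b : ℂ} (ha : a ∈ V) (hb : b ∈ V) :
    ∃ φ : ℂ ≃ₜ ℂ, (∀ z ∉ V, φ z = z) ∧ φ a = b := by
  refine hc.induction₂ (fun a b => ∃ φ : ℂ ≃ₜ ℂ, (∀ z ∉ V, φ z = z) ∧ φ a = b)
    ?_ ?_ ?_ ha hb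
  · intro x hx
    obtain ⟨r, hr, hrV⟩ := Metric.isOpen_iff.1 hV x hx
    filter_upwards [mem_nhdsWithin_of_mem_nhds (ball_mem_nhds x hr)] with y hy
    obtain ⟨φ, h1, h2⟩ := exists_homeomorph_ball hr hy
    exact ⟨φ, fun z hz => h1 z fun h => hz (hrV h), h2⟩
  · rintro x y z - - - ⟨φ, h1, h2⟩ ⟨ψ, h3, h4⟩
    exact ⟨φ.trans ψ, fun w hw => by simp [h1 w hw, h3 w hw], by simp [h2, h4]⟩
  · rintro x y - - ⟨φ, h1, h2⟩
    exact ⟨φ.symm, fun w hw => by rw [Homeomorph.symm_apply_eq, h1 w hw],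
      by rw [Homeomorph.symm_apply_eq, h2]⟩

lemma isPathConnected_ball_diff_finite (x : ℂ) {r : ℝ} (hr : 0 < r) {F : Set ℂ}
    (hF : F.Finite) : IsPathConnected (ball x r \ F) := by
  set e := OpenPartialHomeomorph.univBall x r with he
  have hsrc : e.source = univ := OpenPartialHomeomorph.univBall_source x r
  have htgt : e.target = ball x r := OpenPartialHomeomorph.univBall_target x hr
  have hinj : Function.Injective e := by
    rw [← injOn_univ, ← hsrc]
    exact e.injOn
  have hcount : (e ⁻¹' F).Countable := hF.countable.preimage_of_injOn hinj.injOn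
  have h := (hcount.isPathConnected_compl_of_one_lt_rank
    (by rw [Complex.rank_real_complex]; norm_num)).image
    (OpenPartialHomeomorph.continuous_univBall x r)
  convert h using 1
  rw [← preimage_compl, image_preimage_eq_inter_range, ← image_univ, ← hsrc,
    e.image_source_eq_target, htgt, sdiff_eq, inter_comm]

lemma neBot_nhdsWithin_compl_finite {F : Set ℂ} (hF : F.Finite) (x : ℂ) :
    (𝓝[Fᶜ] x).NeBot :=
  mem_closure_iff_nhdsWithin_neBot.1 ((hF.countable.dense_compl ℝ) x)

/-- The relation "all points near `a` and off `F` can be joined in `U \ F` to all points near `b`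
and off `F`" makes sense for all `a, b ∈ U`, including points of `F`, and is an equivalence relation
with open classes, because a ball minus a finite set is path connected. -/
lemma isPreconnected_diff_finite {U F : Set ℂ} (hU : IsOpen U) (hc : IsPreconnected U)
    (hF : F.Finite) : IsPreconnected (U \ F) := by
  let P : ℂ → ℂ → Prop := fun a b =>
    ∀ᶠ a' in 𝓝[Fᶜ] a, ∀ᶠ b' in 𝓝[Fᶜ] b, JoinedIn (U \ F) a' b'
  have hloc : ∀ x ∈ U, ∀ᶠ y in 𝓝[U] x, P x y ∧ P y x := by
    intro x hx
    obtain ⟨r, hr, hrU⟩ := Metric.isOpen_iff.1 hU x hx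
    have hev : ∀ y ∈ ball x r, ∀ᶠ y' in 𝓝[Fᶜ] y, y' ∈ ball x r \ F := fun y hy => by
      filter_upwards [mem_nhdsWithin_of_mem_nhds (isOpen_ball.mem_nhds hy),
        self_mem_nhdsWithin] with y' h1 h2 using ⟨h1, h2⟩
    have hP : ∀ y ∈ ball x r, ∀ z ∈ ball x r, P y z := by
      intro y hy z hz
      filter_upwards [hev y hy] with y' hy'
      filter_upwards [hev z hz] with z' hz'
      exact ((isPathConnected_ball_diff_finite x hr hF).joinedIn y' hy' z' hz').mono
        (sdiff_subset_sdiff_left hrU)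
    filter_upwards [mem_nhdsWithin_of_mem_nhds (ball_mem_nhds x hr)] with y hy
    exact ⟨hP x (mem_ball_self hr) y hy, hP y hy x (mem_ball_self hr)⟩
  have htrans : ∀ x y z, x ∈ U → y ∈ U → z ∈ U → P x y → P y z → P x z := by
    intro x y z _ _ _ hxy hyz
    filter_upwards [hxy] with x' hx'
    have := neBot_nhdsWithin_compl_finite hF y
    obtain ⟨y', h1, h2⟩ := (hx'.and hyz).exists
    filter_upwards [h2] with z' hz' using h1.trans hz'
  refine isPreconnected_of_forall_pair fun a ha b hb => ?_
  have hab : P a b := hc.induction₂' P hloc htrans ha.1 hb.1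
  have hj : JoinedIn (U \ F) a b :=
    (hab.self_of_nhdsWithin ha.2).self_of_nhdsWithin hb.2
  obtain ⟨γ, hγ⟩ := hj
  exact ⟨range γ, range_subset_iff.2 hγ, γ.source_mem_range, γ.target_mem_range,
    isPreconnected_range γ.continuous⟩

/-- Homeomorphisms supported in a connected open set `U` can make an infinite subset of `U` swallow
any finite subset of `U`. The points are moved one at a time, each by a homeomorphism that fixes the
points already covered. -/
lemma exists_homeomorph_subset_image {U I F : Set ℂ} (hU : IsOpen U) (hc : IsPreconnected U)
    (hI : I ⊆ U) (hinf : I.Infinite) (hF : F.Finite) (hFU : F ⊆ U) :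
    ∃ φ : ℂ ≃ₜ ℂ, (∀ z ∉ U, φ z = z) ∧ F ⊆ φ '' I := by
  induction F, hF using Set.Finite.induction_on with
  | empty => exact ⟨Homeomorph.refl ℂ, fun z _ => rfl, empty_subset _⟩
  | @insert q F hq hF ih =>
    obtain ⟨φ, h1, h2⟩ := ih fun z hz => hFU (mem_insert_of_mem q hz)
    obtain ⟨_, ⟨p, hp, rfl⟩, hpF⟩ :=
      (hinf.image φ.injective.injOn).exists_notMem_finite hF
    -- `φ` maps `U` into itself, being injective and the identity off `U`
    have hpU : φ p ∈ U := by
      by_contra h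
      have : p = φ p := φ.injective (h1 _ h).symm
      exact h (this ▸ hI hp)
    obtain ⟨ψ, h3, h4⟩ := exists_homeomorph_of_isPreconnected
      (hU.sdiff hF.isClosed) (isPreconnected_diff_finite hU hc hF)
      (a := φ p) (b := q) ⟨hpU, hpF⟩ ⟨hFU (mem_insert q F), hq⟩
    refine ⟨φ.trans ψ, fun z hz => ?_, ?_⟩
    · simp [h1 z hz, h3 z fun h => hz h.1]
    · rintro w (rfl | hw)
      · exact ⟨p, hp, h4⟩
      · obtain ⟨i, hi, rfl⟩ := h2 hw
        exact ⟨i, hi, h3 _ fun h => h.2 hw⟩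

lemma not_isBounded_connectedComponentIn (φ : ℂ ≃ₜ ℂ) {x w : ℂ} {r : ℝ} (hr : 0 < r)
    (hw : w ∉ closedBall x r) :
    ¬ Bornology.IsBounded (connectedComponentIn (φ '' sphere x r)ᶜ (φ w)) := by
  intro hb
  have hwr : r < ‖w - x‖ := by simpa [dist_eq_norm] using hw
  have hpos : 0 < ‖w - x‖ := hr.trans hwr
  let ρ : ℝ → ℂ := fun s => x + s • (w - x)
  have hρ : Continuous ρ := by fun_prop
  have hdist : ∀ s, 1 ≤ s → dist (ρ s) x = s * ‖w - x‖ := fun s hs => by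
    simp [ρ, dist_eq_norm, abs_of_nonneg (zero_le_one.trans hs)]
  have hsub : φ '' (ρ '' Ici 1) ⊆ connectedComponentIn (φ '' sphere x r)ᶜ (φ w) := by
    refine IsPreconnected.subset_connectedComponentIn
      ((isPreconnected_Ici.image ρ hρ.continuousOn).image φ φ.continuous.continuousOn)
      ⟨w, ⟨1, self_mem_Ici, by simp [ρ]⟩, rfl⟩ ?_
    rintro _ ⟨_, ⟨s, hs, rfl⟩, rfl⟩ ⟨u, hu, he⟩
    rw [φ.injective he, mem_sphere, hdist s hs] at hu
    nlinarith [mem_Ici.1 hs]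
  -- bounded sets have bounded preimage under a homeomorphism of the plane
  have hb2 : Bornology.IsBounded (φ.symm '' closure (φ '' (ρ '' Ici 1))) :=
    ((hb.subset hsub).isCompact_closure.image φ.symm.continuous).isBounded
  obtain ⟨M, hM⟩ := hb2.subset_closedBall x
  set s := max 1 ((M + 1) / ‖w - x‖) with hs
  have h1 : ρ s ∈ closedBall x M :=
    hM ⟨φ (ρ s), subset_closure ⟨_, ⟨s, mem_Ici.2 (le_max_left _ _), rfl⟩, rfl⟩, by simp⟩
  rw [mem_closedBall, hdist s (le_max_left _ _)] at h1
  have h2 : M + 1 ≤ s * ‖w - x‖ := (div_le_iff₀ hpos).1 (le_max_right _ _)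
  linarith


/-- Every nonempty compact connected set `K ⊆ ℂ` can be approximated within Hausdorff
distance `ε` by a Jordan curve `Γ` which is `ε`-thin: every point of every bounded
connected component of `ℂ \ Γ` lies within distance `ε` of `Γ`. -/
theorem compact_connected_approx_by_thin_jordan_curve
    (K : Set ℂ) (hKne : K.Nonempty) (hKcomp : IsCompact K) (hKconn : IsConnected K)
    (ε : ℝ) (hε : 0 < ε) :
    ∃ Γ : Set ℂ,
      (∃ γ : ℂ → ℂ, ContinuousOn γ (Metric.sphere (0 : ℂ) 1) ∧
        Set.InjOn γ (Metric.sphere (0 : ℂ) 1) ∧ Γ = γ '' Metric.sphere (0 : ℂ) 1) ∧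
      Metric.hausdorffDist Γ K < ε ∧
      (∀ z : ℂ, z ∉ Γ → Bornology.IsBounded (connectedComponentIn Γᶜ z) →
        Metric.infDist z Γ ≤ ε) := by
  obtain ⟨x, hx⟩ := hKne
  set δ := ε / 3 with hδ
  have hδ0 : 0 < δ := by positivity
  set U := thickening δ K with hU
  have hUo : IsOpen U := isOpen_thickening
  have hUc : IsPreconnected U := by
    rw [hU, ← add_ball_zero, ← Set.add_image_prod]
    exact (hKconn.isPreconnected.prod isPreconnected_ball).image _ continuous_add.continuousOn
  have hKU : K ⊆ U := self_subset_thickening hδ0 K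
  obtain ⟨r, hr, hrU⟩ := nhds_basis_closedBall.mem_iff.1 (hUo.mem_nhds (hKU hx))
  obtain ⟨F, hFK, hF, hcov⟩ := hKcomp.finite_cover_balls hδ0
  have hinf : (sphere x r).Infinite := by
    refine (isPreconnected_sphere (by rw [Complex.rank_real_complex]; norm_num) x r
      ).infinite_of_nontrivial ⟨x + r, ?_, x - r, ?_, fun h => ?_⟩
    · simp [hr.le]
    · simp [hr.le]
    · have := congrArg Complex.re h
      simp at this
      linarith
  obtain ⟨φ, hφ, hFφ⟩ := exists_homeomorph_subset_image hUo hUc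
    (sphere_subset_closedBall.trans hrU) hinf hF (hFK.trans hKU)
  have hmaps : ∀ w ∈ U, φ w ∈ U := fun w hw => by
    by_contra h
    have : w = φ w := φ.injective (hφ _ h).symm
    exact h (this ▸ hw)
  have hnet : ∀ k ∈ K, ∃ q ∈ φ '' sphere x r, dist k q < δ := fun k hk => by
    obtain ⟨q, hq, hkq⟩ := mem_iUnion₂.1 (hcov hk)
    exact ⟨q, hFφ hq, hkq⟩
  refine ⟨φ '' sphere x r, ⟨fun z => φ (x + r * z), ?_, ?_, ?_⟩, ?_, ?_⟩
  · exact (φ.continuous.comp (by fun_prop)).continuousOn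
  · intro a _ b _ hab
    have := φ.injective hab
    simpa [hr.ne'] using this
  · rw [show (fun z => φ (x + r * z)) = φ ∘ fun z : ℂ => x + r * z from rfl, image_comp]
    congr 1
    ext z
    constructor
    · intro hz
      have hz' : ‖z - x‖ = r := by simpa [dist_eq_norm] using hz
      have hrc : (r : ℂ) ≠ 0 := by exact_mod_cast hr.ne'
      refine ⟨(z - x) / r, ?_, ?_⟩
      · simp [hz', abs_of_pos hr, hr.ne']
      · field_simp
        ring
    · rintro ⟨u, hu, rfl⟩
      have hu' : ‖u‖ = 1 := by simpa using hu
      simp [hu', hr.le]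
  · refine (hausdorffDist_le_of_mem_dist hδ0.le ?_ ?_).trans_lt (by linarith : δ < ε)
    · rintro _ ⟨w, hw, rfl⟩
      obtain ⟨k, hk, hd⟩ := mem_thickening_iff.1
        (hmaps w (hrU (sphere_subset_closedBall hw)))
      exact ⟨k, hk, hd.le⟩
    · intro k hk
      obtain ⟨q, hq, hd⟩ := hnet k hk
      exact ⟨q, hq, hd.le⟩
  · intro z _ hb
    obtain ⟨w, rfl⟩ := φ.surjective z
    have hw : w ∈ closedBall x r := by
      by_contra h
      exact not_isBounded_connectedComponentIn φ hr h hb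
    obtain ⟨k, hk, hd⟩ := mem_thickening_iff.1 (hmaps w (hrU hw))
    obtain ⟨q, hq, hd'⟩ := hnet k hk
    linarith [infDist_le_dist_of_mem (x := φ w) hq, dist_triangle (φ w) k q]
end
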